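/- arXiv:2007.11552 — 2 statements merged into one kernel-verified Lean document; each statement's English description precedes it below -/
import Mathlib

section
/- Let (S_j)_{j∈J} be a directed system of commutative rings indexed by a nonempty directed partially ordered set J, such that each S_j is Noetherian and each transition homomorphism S_i → S_j (for i ≤ j) is flat, and let S = colim_j S_j be the colimit ring. Then for every n ≥ 0 the polynomial ring S[x_1, …, x_n] is a coherent ring. -/
/-- A commutative ring is *coherent* if every finitely generated ideal is finitely
presented as a module over the ring. -/
def IsCoherentRing (R : Type*) [CommRing R] : Prop :=
  ∀ J : Ideal R, J.FG → Module.FinitePresentation R J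

open TensorProduct in
theorem finitePresentation_map_of_flat {A B : Type*} [CommRing A] [CommRing B] [Algebra A B]
    [IsNoetherianRing A] [Module.Flat A B] (I : Ideal A) :
    Module.FinitePresentation B (I.map (algebraMap A B)) := by
  have hI : Module.FinitePresentation A I :=
    Module.finitePresentation_of_finite A I
  let e : B ⊗[A] A ≃ₗ[B] B := AlgebraTensorModule.rid A B B
  let g : B ⊗[A] I →ₗ[B] B := e.toLinearMap ∘ₗ (Submodule.subtype I).baseChange B
  have hg : Function.Injective g := by
    have h1 := Module.Flat.lTensor_preserves_injective_linearMap (M := B)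
      (Submodule.subtype I) I.injective_subtype
    exact e.injective.comp h1
  have hr : LinearMap.range g = I.map (algebraMap A B) := by
    apply le_antisymm
    · rintro _ ⟨x, rfl⟩
      induction x with
      | zero => simp
      | add x y hx hy => rw [map_add]; exact Ideal.add_mem _ hx hy
      | tmul b a =>
        have : g (b ⊗ₜ[A] a) = b * algebraMap A B a := by
          simp [g, e, Algebra.smul_def, mul_comm]
        rw [this]
        exact Ideal.mul_mem_left _ _ (Ideal.mem_map_of_mem _ a.2)
    · rw [Ideal.map_le_iff_le_comap]
      intro a ha
      exact ⟨1 ⊗ₜ[A] ⟨a, ha⟩, by simp [g, e, Algebra.smul_def]⟩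
  have e2 := (LinearEquiv.ofInjective g hg).trans (LinearEquiv.ofEq _ _ hr)
  exact Module.FinitePresentation.of_equiv e2

theorem coherent_of_locally {B : Type*} [CommRing B]
    (h : ∀ s : Finset B, ∃ (A : Type*) (_ : CommRing A) (φ : A →+* B),
      IsNoetherianRing A ∧ φ.Flat ∧ ∀ b ∈ s, b ∈ φ.range) : IsCoherentRing B := by
  rintro I ⟨s, rfl⟩
  obtain ⟨A, _, φ, hA, hφ, hs⟩ := h s
  algebraize [φ]
  have key : (Ideal.span (s : Set B)) =
      ((Ideal.span (s : Set B)).comap φ).map (algebraMap A B) := by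
    apply le_antisymm
    · rw [Ideal.span_le]
      intro b hb
      obtain ⟨a, rfl⟩ := hs b hb
      exact Ideal.mem_map_of_mem φ (show φ a ∈ _ from Ideal.subset_span hb)
    · exact Ideal.map_comap_le
  change Module.FinitePresentation B (Ideal.span (s : Set B))
  rw [key]
  exact finitePresentation_map_of_flat _

attribute [local instance] MvPolynomial.algebraMvPolynomial in
theorem mvPolynomial_map_flat {R S σ : Type*} [CommRing R] [CommRing S] (φ : R →+* S)
    (h : φ.Flat) : (MvPolynomial.map φ : MvPolynomial σ R →+* MvPolynomial σ S).Flat := by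
  algebraize [φ]
  have : Algebra.IsPushout R (MvPolynomial σ R) S (MvPolynomial σ S) := inferInstance
  have h2 : Module.Flat (MvPolynomial σ R) (MvPolynomial σ S) :=
    Module.Flat.isBaseChange R (MvPolynomial σ R) S (MvPolynomial σ S) this.out
  exact h2

theorem flat_iff_relation {R S : Type*} [CommRing R] [CommRing S] (φ : R →+* S) :
    φ.Flat ↔ ∀ (l : ℕ) (a : Fin l → R) (x : Fin l → S), ∑ i, φ (a i) * x i = 0 →
      ∃ (p : ℕ) (b : Fin l → Fin p → R) (z : Fin p → S),
        (∀ i, x i = ∑ q, φ (b i q) * z q) ∧ ∀ q, ∑ i, a i * b i q = 0 := by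
  algebraize [φ]
  have h : φ.Flat ↔ Module.Flat R S := Iff.rfl
  rw [h, Module.Flat.iff_forall_isTrivialRelation]
  simp only [Module.IsTrivialRelation, Algebra.smul_def, RingHom.algebraMap_toAlgebra]

section
variable {J : Type*} [PartialOrder J] [Nonempty J]
    [IsDirected J (· ≤ ·)] (G : J → Type*) [∀ j, CommRing (G j)]
    (f : ∀ i j, i ≤ j → G i →+* G j)

theorem directLimit_exists_ge (j : J) (s : Set (Ring.DirectLimit G fun i j h => ⇑(f i j h)))
    (hs : s.Finite) :
    ∃ k, j ≤ k ∧ ∀ x ∈ s, x ∈ (Ring.DirectLimit.of G (fun i j h => ⇑(f i j h)) k).range := by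
  induction s, hs using Set.Finite.induction_on with
  | empty => exact ⟨j, le_rfl, by simp⟩
  | @insert a s _ _ ih =>
    obtain ⟨k, hk, hks⟩ := ih
    obtain ⟨i, y, rfl⟩ := Ring.DirectLimit.exists_of a
    obtain ⟨m, hkm, him⟩ := exists_ge_ge k i
    refine ⟨m, hk.trans hkm, ?_⟩
    rintro x (rfl | hx)
    · exact ⟨f i m him y, by simp⟩
    · obtain ⟨z, rfl⟩ := hks x hx
      exact ⟨f k m hkm z, by simp⟩

theorem directLimit_of_flat [DirectedSystem G fun i j h => ⇑(f i j h)]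
    (hflat : ∀ i j (h : i ≤ j), (f i j h).Flat) (j : J) :
    (Ring.DirectLimit.of G (fun i j h => ⇑(f i j h)) j).Flat := by
  rw [flat_iff_relation]
  intro l a x hx
  obtain ⟨k, hk, hks⟩ := directLimit_exists_ge G f j (Set.range x) (Set.finite_range x)
  choose y hy using fun i => hks (x i) ⟨i, rfl⟩
  have h0 : Ring.DirectLimit.of G (fun i j h => ⇑(f i j h)) k
      (∑ i, f j k hk (a i) * y i) = 0 := by
    rw [map_sum, ← hx]
    refine Finset.sum_congr rfl fun i _ => ?_
    rw [map_mul, hy, Ring.DirectLimit.of_f]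
  obtain ⟨m, hkm, hm⟩ := Ring.DirectLimit.of.zero_exact h0
  have hrel : ∑ i, f j m (hk.trans hkm) (a i) * f k m hkm (y i) = 0 := by
    rw [← hm, map_sum]
    refine Finset.sum_congr rfl fun i _ => ?_
    rw [map_mul]
    congr 1
    exact (DirectedSystem.map_map (f := fun i j h => ⇑(f i j h)) hk hkm (a i)).symm
  obtain ⟨p, b, z, h1, h2⟩ := (flat_iff_relation _).1 (hflat j m (hk.trans hkm)) l a _ hrel
  refine ⟨p, b, fun q => Ring.DirectLimit.of G (fun i j h => ⇑(f i j h)) m (z q), ?_, h2⟩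
  intro i
  rw [← hy i, ← Ring.DirectLimit.of_f (f := fun i j h => ⇑(f i j h)) hkm, h1 i, map_sum]
  refine Finset.sum_congr rfl fun q _ => ?_
  rw [map_mul, Ring.DirectLimit.of_f]

end

/-- Let `(S_j)_{j ∈ J}` be a directed system of commutative rings indexed by
a nonempty directed partially ordered set `J`, such that each `S_j` is Noetherian and each
transition homomorphism `S_i → S_j` (for `i ≤ j`) is flat, and let `S = colim_j S_j` be the
colimit ring. Then for every `n ≥ 0` the polynomial ring `S[x_1, …, x_n]` is coherent. -/
theorem isCoherentRing_mvPolynomial_directLimit {J : Type*} [PartialOrder J] [Nonempty J]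
    [IsDirected J (· ≤ ·)] (G : J → Type*) [∀ j, CommRing (G j)]
    (hNoeth : ∀ j, IsNoetherianRing (G j))
    (f : ∀ i j, i ≤ j → G i →+* G j)
    [DirectedSystem G fun i j h => ⇑(f i j h)]
    (hflat : ∀ i j (h : i ≤ j), (f i j h).Flat)
    (n : ℕ) :
    IsCoherentRing (MvPolynomial (Fin n) (Ring.DirectLimit G fun i j h => ⇑(f i j h))) := by
  refine coherent_of_locally fun s => ?_
  obtain ⟨k, -, hk⟩ := directLimit_exists_ge G f (Classical.arbitrary J)
    (⋃ p ∈ s, (p.coeffs : Set (Ring.DirectLimit G fun i j h => ⇑(f i j h))))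
    (Set.Finite.biUnion s.finite_toSet fun p _ => p.coeffs.finite_toSet)
  have := hNoeth k
  refine ⟨MvPolynomial (Fin n) (G k), inferInstance,
    MvPolynomial.map (Ring.DirectLimit.of G (fun i j h => ⇑(f i j h)) k), inferInstance,
    mvPolynomial_map_flat _ (directLimit_of_flat G f hflat k), fun p hp => ?_⟩
  rw [RingHom.mem_range, ← Set.mem_range, MvPolynomial.mem_range_map_iff_coeffs_subset]
  intro c hc
  exact hk c (Set.mem_biUnion hp hc)
end

section
/- Let R be a ℤ-graded commutative ring that is evenly graded (the homogeneous component R_i is zero for every odd integer i) and 2-periodic (there is a unit of R that is homogeneous of degree 2). Then the assignment 𝔮 ↦ 𝔮 ∩ R_0 is a bijection from the set of homogeneous prime ideals of R to the set of prime ideals of the degree-zero subring R_0, with inverse 𝔭 ↦ 𝔭·R (the ideal of R generated by 𝔭), and both assignments preserve inclusions of ideals. -/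
/-- The inverse of a homogeneous unit of degree 2 is homogeneous of degree -2. -/
lemma aux_inv_mem {R : Type*} [CommRing R] (𝒜 : ℤ → AddSubgroup R) [GradedRing 𝒜]
    (u : Rˣ) (hu : (u : R) ∈ 𝒜 2) : ((u⁻¹ : Rˣ) : R) ∈ 𝒜 (-2) := by
  have h := DirectSum.coe_decompose_mul_add_of_left_mem 𝒜 (j := -2)
    (b := ((u⁻¹ : Rˣ) : R)) hu
  rw [Units.mul_inv, show (2 : ℤ) + -2 = 0 by norm_num,
    DirectSum.decompose_of_mem_same 𝒜 (SetLike.GradedOne.one_mem (A := 𝒜))] at h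
  have h2 : ((u⁻¹ : Rˣ) : R) = (DirectSum.decompose 𝒜 ((u⁻¹ : Rˣ) : R) (-2) : R) :=
    Units.inv_eq_of_mul_eq_one_right h.symm
  rw [h2]
  exact SetLike.coe_mem _

/-- Every homogeneous element can be moved to degree zero by a unit. -/
lemma aux_unit {R : Type*} [CommRing R] (𝒜 : ℤ → AddSubgroup R) [GradedRing 𝒜]
    (heven : ∀ i : ℤ, Odd i → 𝒜 i = ⊥) (hperiodic : ∃ u : Rˣ, (u : R) ∈ 𝒜 2)
    (i : ℤ) (x : R) (hx : x ∈ 𝒜 i) : ∃ w : Rˣ, (w : R) * x ∈ 𝒜 0 := by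
  rcases Int.even_or_odd i with he | ho
  · obtain ⟨u, hu⟩ := hperiodic
    have hv := aux_inv_mem 𝒜 u hu
    obtain ⟨k, hk⟩ := he
    obtain ⟨n, rfl | rfl⟩ := Int.eq_nat_or_neg k
    · refine ⟨u⁻¹ ^ n, ?_⟩
      have h := SetLike.mul_mem_graded (SetLike.pow_mem_graded n hv) hx
      have e : n • (-2 : ℤ) + i = 0 := by rw [hk, nsmul_eq_mul]; ring
      rw [e] at h
      simpa only [Units.val_pow_eq_pow_val] using h
    · refine ⟨u ^ n, ?_⟩
      have h := SetLike.mul_mem_graded (SetLike.pow_mem_graded n hu) hx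
      have e : n • (2 : ℤ) + i = 0 := by rw [hk, nsmul_eq_mul]; ring
      rw [e] at h
      simpa only [Units.val_pow_eq_pow_val] using h
  · rw [heven i ho, AddSubgroup.mem_bot] at hx
    exact ⟨1, by rw [hx, mul_zero]; exact zero_mem _⟩

/-- The degree-zero component of an element of `p R` lies in `p`. -/
lemma aux_zero {R : Type*} [CommRing R] (𝒜 : ℤ → AddSubgroup R) [GradedRing 𝒜]
    (p : Ideal (SetLike.GradeZero.subring 𝒜)) (y : R)
    (hy : y ∈ Ideal.map (SetLike.GradeZero.subring 𝒜).subtype p) :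
    (⟨(DirectSum.decompose 𝒜 y 0 : R), SetLike.coe_mem _⟩ :
      SetLike.GradeZero.subring 𝒜) ∈ p := by
  suffices h : ∃ a ∈ p, (a : R) = (DirectSum.decompose 𝒜 y 0 : R) by
    obtain ⟨a, ha, e⟩ := h
    convert ha using 1
    exact Subtype.ext e.symm
  unfold Ideal.map at hy
  induction hy using Submodule.closure_induction with
  | zero => exact ⟨0, p.zero_mem, by simp⟩
  | add x y _ _ hx hy =>
    obtain ⟨a, ha, ea⟩ := hx
    obtain ⟨b, hb, eb⟩ := hy
    exact ⟨a + b, p.add_mem ha hb, by simp [ea, eb]⟩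
  | smul_mem r x hx =>
    obtain ⟨a, ha, rfl⟩ := hx
    refine ⟨⟨(DirectSum.decompose 𝒜 r 0 : R), SetLike.coe_mem _⟩ * a,
      p.mul_mem_left _ ha, ?_⟩
    have h := DirectSum.coe_decompose_mul_add_of_right_mem 𝒜 (i := 0) (a := r)
      (b := (a : R)) (j := 0) a.2
    rw [add_zero] at h
    exact h.symm

/-- Let `R` be a `ℤ`-graded commutative ring that is evenly graded (the
homogeneous component `R_i` vanishes for every odd `i`) and 2-periodic (there is a unit of
`R` that is homogeneous of degree 2). Then `𝔮 ↦ 𝔮 ∩ R_0` is a bijection from the set of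
homogeneous prime ideals of `R` to the set of prime ideals of the degree-zero subring `R_0`,
with inverse `𝔭 ↦ 𝔭·R`, and both assignments preserve inclusions of ideals. -/
theorem homogeneousPrime_equiv_prime_gradeZero {R : Type*} [CommRing R]
    (𝒜 : ℤ → AddSubgroup R) [GradedRing 𝒜]
    (heven : ∀ i : ℤ, Odd i → 𝒜 i = ⊥)
    (hperiodic : ∃ u : Rˣ, (u : R) ∈ 𝒜 2) :
    (∀ q : Ideal R, Ideal.IsHomogeneous 𝒜 q → q.IsPrime →
      (q.comap (SetLike.GradeZero.subring 𝒜).subtype).IsPrime ∧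
      Ideal.map (SetLike.GradeZero.subring 𝒜).subtype
        (q.comap (SetLike.GradeZero.subring 𝒜).subtype) = q) ∧
    (∀ p : Ideal (SetLike.GradeZero.subring 𝒜), p.IsPrime →
      (Ideal.map (SetLike.GradeZero.subring 𝒜).subtype p).IsHomogeneous 𝒜 ∧
      (Ideal.map (SetLike.GradeZero.subring 𝒜).subtype p).IsPrime ∧
      (Ideal.map (SetLike.GradeZero.subring 𝒜).subtype p).comap
        (SetLike.GradeZero.subring 𝒜).subtype = p) ∧
    (∀ q₁ q₂ : Ideal R, q₁ ≤ q₂ →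
      q₁.comap (SetLike.GradeZero.subring 𝒜).subtype ≤
        q₂.comap (SetLike.GradeZero.subring 𝒜).subtype) ∧
    (∀ p₁ p₂ : Ideal (SetLike.GradeZero.subring 𝒜), p₁ ≤ p₂ →
      Ideal.map (SetLike.GradeZero.subring 𝒜).subtype p₁ ≤
        Ideal.map (SetLike.GradeZero.subring 𝒜).subtype p₂) := by
  have hcm : ∀ p : Ideal (SetLike.GradeZero.subring 𝒜),
      (Ideal.map (SetLike.GradeZero.subring 𝒜).subtype p).comap
        (SetLike.GradeZero.subring 𝒜).subtype = p := by
    intro p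
    refine le_antisymm (fun x hx => ?_) Ideal.le_comap_map
    have h := aux_zero 𝒜 p (x : R) hx
    convert h using 1
    exact Subtype.ext (DirectSum.decompose_of_mem_same 𝒜 x.2).symm
  refine ⟨fun q hq hp => ⟨Ideal.IsPrime.comap _, le_antisymm Ideal.map_comap_le ?_⟩,
    fun p hp => ?_, fun _ _ h => Ideal.comap_mono h, fun _ _ h => Ideal.map_mono h⟩
  · intro x hx
    classical
    rw [← DirectSum.sum_support_decompose 𝒜 x]
    refine Ideal.sum_mem _ fun i _ => ?_
    obtain ⟨w, hw⟩ := aux_unit 𝒜 heven hperiodic i _ (SetLike.coe_mem (DirectSum.decompose 𝒜 x i))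
    rw [← Ideal.unit_mul_mem_iff_mem _ w.isUnit]
    have hmem : (⟨_, hw⟩ : SetLike.GradeZero.subring 𝒜) ∈
        q.comap (SetLike.GradeZero.subring 𝒜).subtype :=
      Ideal.mem_comap.mpr (q.mul_mem_left _ (hq i hx))
    exact Ideal.mem_map_of_mem (SetLike.GradeZero.subring 𝒜).subtype hmem
  · have hh : (Ideal.map (SetLike.GradeZero.subring 𝒜).subtype p).IsHomogeneous 𝒜 := by
      refine Ideal.homogeneous_span 𝒜 _ ?_
      rintro _ ⟨a, _, rfl⟩
      exact ⟨0, a.2⟩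
    refine ⟨hh, ?_, hcm p⟩
    refine Ideal.IsHomogeneous.isPrime_of_homogeneous_mem_or_mem hh ?_ ?_
    · intro h
      apply hp.ne_top
      rw [← hcm p, h, Ideal.comap_top]
    · rintro x y ⟨i, hx⟩ ⟨j, hy⟩ hxy
      obtain ⟨w, hw⟩ := aux_unit 𝒜 heven hperiodic i x hx
      obtain ⟨v, hv⟩ := aux_unit 𝒜 heven hperiodic j y hy
      have key : (⟨_, hw⟩ * ⟨_, hv⟩ : SetLike.GradeZero.subring 𝒜) ∈ p := by
        rw [← hcm p, Ideal.mem_comap]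
        have e : (SetLike.GradeZero.subring 𝒜).subtype (⟨_, hw⟩ * ⟨_, hv⟩) =
            (w * v : R) * (x * y) := by
          change (w * x : R) * (v * y) = _
          ring
        rw [e]
        exact Ideal.mul_mem_left _ _ hxy
      rcases hp.mem_or_mem key with h | h
      · left
        rw [← Ideal.unit_mul_mem_iff_mem _ w.isUnit]
        exact Ideal.mem_map_of_mem (SetLike.GradeZero.subring 𝒜).subtype h
      · right
        rw [← Ideal.unit_mul_mem_iff_mem _ v.isUnit]
        exact Ideal.mem_map_of_mem (SetLike.GradeZero.subring 𝒜).subtype h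
end
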